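/- arXiv:2304.01722 — 4 statements merged into one kernel-verified Lean document; each statement's English description precedes it below -/
import Mathlib

section
/- Let V be a real Hilbert space, U a real normed space, B : U → V* a continuous linear map into the continuous dual of V, Uⁿ ⊆ U a linear subspace, and ℓ ∈ V*. Then an element u₀ ∈ Uⁿ satisfies ‖ℓ − B u₀‖_{V*} ≤ ‖ℓ − B w‖_{V*} for all w ∈ Uⁿ (i.e., u₀ minimizes the residual dual norm over Uⁿ) if and only if there exists r ∈ V such that ⟨r, v⟩ = ℓ(v) − (B u₀)(v) for all v ∈ V, and (B w)(r) = 0 for all w ∈ Uⁿ. (The element r is then the Riesz representative of the residual ℓ − B u₀.) -/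
open RealInnerProductSpace

/-- In a real inner product space, `v ∈ K` is a best approximation of `u` in the subspace `K`
iff `u - v` is orthogonal to `K`. -/
theorem Submodule.forall_norm_sub_le_iff_real_inner_eq_zero
    {F : Type*} [NormedAddCommGroup F] [InnerProductSpace ℝ F]
    (K : Submodule ℝ F) {u v : F} (hv : v ∈ K) :
    (∀ w ∈ K, ‖u - v‖ ≤ ‖u - w‖) ↔ ∀ w ∈ K, ⟪u - v, w⟫ = 0 := by
  rw [← K.norm_eq_iInf_iff_real_inner_eq_zero hv]
  have hbdd : BddBelow (Set.range fun w : (K : Set F) => ‖u - w‖) :=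
    ⟨0, by rintro _ ⟨w, rfl⟩; exact norm_nonneg _⟩
  constructor
  · intro h
    have : Nonempty (K : Set F) := ⟨⟨v, hv⟩⟩
    exact le_antisymm (le_ciInf fun w => h w w.2) (ciInf_le hbdd ⟨v, hv⟩)
  · intro h w hw
    exact h.trans_le (ciInf_le hbdd ⟨w, hw⟩)

/-- Characterization of minimal-residual approximations: `u₀ ∈ Uⁿ` minimizes the
residual dual norm `‖ℓ - B w‖` over `Uⁿ` iff there is `r ∈ V` (the Riesz
representative of the residual) with `⟪r, v⟫ = ℓ v - (B u₀) v` for all `v` and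
`(B w) r = 0` for all `w ∈ Uⁿ`. -/
theorem minres_iff_mixed_formulation
    {V : Type*} [NormedAddCommGroup V] [InnerProductSpace ℝ V] [CompleteSpace V]
    {U : Type*} [NormedAddCommGroup U] [NormedSpace ℝ U]
    (B : U →L[ℝ] (V →L[ℝ] ℝ)) (Un : Submodule ℝ U) (ℓ : V →L[ℝ] ℝ)
    (u₀ : U) (hu₀ : u₀ ∈ Un) :
    (∀ w ∈ Un, ‖ℓ - B u₀‖ ≤ ‖ℓ - B w‖) ↔
      ∃ r : V, (∀ v : V, ⟪r, v⟫ = ℓ v - (B u₀) v) ∧ ∀ w ∈ Un, (B w) r = 0 := by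
  let R : (V →L[ℝ] ℝ) ≃ₗᵢ[ℝ] V := (InnerProductSpace.toDual ℝ V).symm
  have hR (f : V →L[ℝ] ℝ) (v : V) : ⟪R f, v⟫ = f v := InnerProductSpace.toDual_symm_apply
  let K : Submodule ℝ V := Un.map (R.toLinearEquiv.toLinearMap ∘ₗ B.toLinearMap)
  have hK := K.forall_norm_sub_le_iff_real_inner_eq_zero (u := R ℓ)
    (Submodule.mem_map_of_mem hu₀)
  have hmin : (∀ w ∈ Un, ‖ℓ - B u₀‖ ≤ ‖ℓ - B w‖) ↔ ∀ w ∈ Un, (B w) (R (ℓ - B u₀)) = 0 := by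
    have hswap (w : U) : (B w) (R (ℓ - B u₀)) = (ℓ - B u₀) (R (B w)) := by
      rw [← hR, real_inner_comm, hR]
    simpa [K, ← map_sub, hR, hswap] using hK
  rw [hmin]
  constructor
  · exact fun h => ⟨R (ℓ - B u₀), fun v => hR _ v, h⟩
  · rintro ⟨r, hr, hB⟩
    have hr_eq : R (ℓ - B u₀) = r := ext_inner_right ℝ fun v => by
      rw [hR, hr, sub_apply]
    rwa [hr_eq]
end

section
/- Let V be a real Hilbert space with inner product ⟨·,·⟩, U a real normed space, B : U → V* continuous linear, Uⁿ ⊆ U a subspace, and ℓ ∈ V*. Let a : V × V → ℝ be a symmetric bilinear form with C₁⟨v, v⟩ ≤ a(v, v) ≤ C₂⟨v, v⟩ for all v ∈ V, where 0 < C₁ ≤ C₂, and let ‖f‖_{V*(a)} := sup{ f(v)/√(a(v,v)) : v ≠ 0 } denote the associated weighted dual norm. If u_a ∈ Uⁿ minimizes w ↦ ‖ℓ − B w‖_{V*(a)} over Uⁿ, then ‖ℓ − B u_a‖_{V*} ≤ √(C₂/C₁) · ‖ℓ − B w‖_{V*} for every w ∈ Uⁿ; that is, the minimizer with respect to any equivalent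 weighted inner product is quasi-optimal in the original dual norm with constant √(C₂/C₁). -/
open RealInnerProductSpace

/-- The dual norm of `f` weighted by the bilinear form `a`. -/
noncomputable def weightedDualNorm {V : Type*} [NormedAddCommGroup V] [InnerProductSpace ℝ V]
    (a : V →ₗ[ℝ] V →ₗ[ℝ] ℝ) (f : V →L[ℝ] ℝ) : ℝ :=
  ⨆ v : {v : V // v ≠ 0}, f v.1 / Real.sqrt (a v.1 v.1)

section WeightedDualNorm

variable {V : Type*} [NormedAddCommGroup V] [InnerProductSpace ℝ V]
  {a : V →ₗ[ℝ] V →ₗ[ℝ] ℝ} {C₁ C₂ : ℝ}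

theorem sqrt_mul_norm_le_sqrt_form (hC₁ : 0 < C₁) (hlow : ∀ v : V, C₁ * ⟪v, v⟫ ≤ a v v)
    (v : V) : √C₁ * ‖v‖ ≤ √(a v v) := by
  have h := Real.sqrt_le_sqrt (hlow v)
  rwa [real_inner_self_eq_norm_sq, Real.sqrt_mul hC₁.le, Real.sqrt_sq (norm_nonneg v)] at h

theorem sqrt_form_le_sqrt_mul_norm (hC₂ : 0 ≤ C₂) (hhigh : ∀ v : V, a v v ≤ C₂ * ⟪v, v⟫)
    (v : V) : √(a v v) ≤ √C₂ * ‖v‖ := by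
  have h := Real.sqrt_le_sqrt (hhigh v)
  rwa [real_inner_self_eq_norm_sq, Real.sqrt_mul hC₂, Real.sqrt_sq (norm_nonneg v)] at h

theorem apply_div_sqrt_form_le (hC₁ : 0 < C₁) (hlow : ∀ v : V, C₁ * ⟪v, v⟫ ≤ a v v)
    (f : V →L[ℝ] ℝ) {v : V} (hv : v ≠ 0) : f v / √(a v v) ≤ ‖f‖ / √C₁ := by
  have hs : 0 < √C₁ := Real.sqrt_pos.2 hC₁
  have hle := sqrt_mul_norm_le_sqrt_form hC₁ hlow v
  have ha : 0 < √(a v v) := (mul_pos hs (norm_pos_iff.2 hv)).trans_le hle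
  rw [div_le_div_iff₀ ha hs]
  calc f v * √C₁ ≤ ‖f‖ * ‖v‖ * √C₁ := by
        gcongr
        exact (le_abs_self _).trans (f.le_opNorm v)
    _ = ‖f‖ * (√C₁ * ‖v‖) := by ring
    _ ≤ ‖f‖ * √(a v v) := by gcongr

theorem weightedDualNorm_le (hC₁ : 0 < C₁) (hlow : ∀ v : V, C₁ * ⟪v, v⟫ ≤ a v v)
    (f : V →L[ℝ] ℝ) : weightedDualNorm a f ≤ ‖f‖ / √C₁ :=
  Real.iSup_le (fun v => apply_div_sqrt_form_le hC₁ hlow f v.2) (by positivity)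

theorem abs_apply_div_sqrt_form_le (hC₁ : 0 < C₁) (hlow : ∀ v : V, C₁ * ⟪v, v⟫ ≤ a v v)
    (f : V →L[ℝ] ℝ) {v : V} (hv : v ≠ 0) : |f v| / √(a v v) ≤ weightedDualNorm a f := by
  have hbdd : BddAbove (Set.range fun v : {v : V // v ≠ 0} => f v.1 / √(a v.1 v.1)) :=
    ⟨‖f‖ / √C₁, by rintro _ ⟨v, rfl⟩; exact apply_div_sqrt_form_le hC₁ hlow f v.2⟩
  rcases abs_choice (f v) with h | h
  · rw [h]
    exact le_ciSup hbdd ⟨v, hv⟩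
  · have := le_ciSup hbdd ⟨-v, neg_ne_zero.2 hv⟩
    simpa [h, weightedDualNorm] using this

theorem norm_le_sqrt_mul_weightedDualNorm (hC₁ : 0 < C₁) (hC₂ : 0 ≤ C₂)
    (hlow : ∀ v : V, C₁ * ⟪v, v⟫ ≤ a v v) (hhigh : ∀ v : V, a v v ≤ C₂ * ⟪v, v⟫)
    (f : V →L[ℝ] ℝ) : ‖f‖ ≤ √C₂ * weightedDualNorm a f := by
  have hnonneg : 0 ≤ weightedDualNorm a f := by
    rcases isEmpty_or_nonempty {v : V // v ≠ 0} with _ | ⟨⟨v, hv⟩⟩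
    · simp [weightedDualNorm]
    · exact le_trans (by positivity) (abs_apply_div_sqrt_form_le hC₁ hlow f hv)
  refine f.opNorm_le_bound (by positivity) fun v => ?_
  rcases eq_or_ne v 0 with rfl | hv
  · simp
  have ha : 0 < √(a v v) := (mul_pos (Real.sqrt_pos.2 hC₁) (norm_pos_iff.2 hv)).trans_le
    (sqrt_mul_norm_le_sqrt_form hC₁ hlow v)
  calc ‖f v‖ ≤ weightedDualNorm a f * √(a v v) :=
        (div_le_iff₀ ha).1 (abs_apply_div_sqrt_form_le hC₁ hlow f hv)
    _ ≤ weightedDualNorm a f * (√C₂ * ‖v‖) := by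
        gcongr
        exact sqrt_form_le_sqrt_mul_norm hC₂ hhigh v
    _ = √C₂ * weightedDualNorm a f * ‖v‖ := by ring

end WeightedDualNorm

/-- Quasi-optimality of the weighted minimal-residual minimizer: if `u_a ∈ Uⁿ`
minimizes the weighted dual norm of the residual (weight `a` equivalent to the
inner product with constants `C₁ ≤ C₂`), then its residual in the original dual
norm is within a factor `√(C₂/C₁)` of any competitor's residual. -/
theorem weighted_minres_quasi_optimal
    {V : Type*} [NormedAddCommGroup V] [InnerProductSpace ℝ V] [CompleteSpace V]
    {U : Type*} [NormedAddCommGroup U] [NormedSpace ℝ U]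
    (B : U →L[ℝ] (V →L[ℝ] ℝ)) (Un : Submodule ℝ U) (ℓ : V →L[ℝ] ℝ)
    (a : V →ₗ[ℝ] V →ₗ[ℝ] ℝ) (hsymm : ∀ u v : V, a u v = a v u)
    (C₁ C₂ : ℝ) (hC₁ : 0 < C₁) (hC₁₂ : C₁ ≤ C₂)
    (hlow : ∀ v : V, C₁ * ⟪v, v⟫ ≤ a v v) (hhigh : ∀ v : V, a v v ≤ C₂ * ⟪v, v⟫)
    (N : (V →L[ℝ] ℝ) → ℝ)
    (hN : ∀ f : V →L[ℝ] ℝ, N f = ⨆ v : {v : V // v ≠ 0}, f v.1 / Real.sqrt (a v.1 v.1))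
    (u_a : U) (hu_a : u_a ∈ Un)
    (hmin : ∀ w ∈ Un, N (ℓ - B u_a) ≤ N (ℓ - B w)) :
    ∀ w ∈ Un, ‖ℓ - B u_a‖ ≤ Real.sqrt (C₂ / C₁) * ‖ℓ - B w‖ := by
  intro w hw
  have hC₂ : 0 ≤ C₂ := hC₁.le.trans hC₁₂
  have hle : weightedDualNorm a (ℓ - B u_a) ≤ weightedDualNorm a (ℓ - B w) := by
    simpa only [hN, weightedDualNorm] using hmin w hw
  calc ‖ℓ - B u_a‖ ≤ √C₂ * weightedDualNorm a (ℓ - B u_a) :=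
        norm_le_sqrt_mul_weightedDualNorm hC₁ hC₂ hlow hhigh _
    _ ≤ √C₂ * (‖ℓ - B w‖ / √C₁) := by
        gcongr
        exact hle.trans (weightedDualNorm_le hC₁ hlow _)
    _ = √(C₂ / C₁) * ‖ℓ - B w‖ := by
        rw [Real.sqrt_div hC₂]
        ring
end

section
/- Let V be a real Hilbert space, V^m ⊆ V a finite-dimensional subspace, U a real normed space, B : U → V* continuous linear, Uⁿ ⊆ U a subspace, and ℓ ∈ V*. For each w ∈ Uⁿ, let r(w) ∈ V^m be the unique element with ⟨r(w), v⟩ = ℓ(v) − (B w)(v) for all v ∈ V^m. Then: (i) for every w ∈ Uⁿ, sup{ (ℓ(v) − (B w)(v))/‖v‖ : v ∈ V^m, v ≠ 0 } = ‖r(w)‖; and (ii) an element u₀ ∈ Uⁿ minimizes this discrete dual seminorm w ↦ sup{ (ℓ(v) − (B w)(v))/‖v‖ : v ∈ V^m, v ≠ 0 } over Uⁿ if and only if (B w)(r(u₀)) = 0 for all w ∈ Uⁿ. -/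
open RealInnerProductSpace

/-- On a subspace, the dual seminorm of a functional is the norm of its Riesz representative. -/
lemma iSup_div_norm_eq_norm_riesz {V : Type*} [NormedAddCommGroup V] [InnerProductSpace ℝ V]
    {W : Submodule ℝ V} {f : V → ℝ} {r : V} (hrW : r ∈ W) (hr : ∀ v ∈ W, ⟪r, v⟫ = f v) :
    (⨆ v : {v : V // v ∈ W ∧ v ≠ 0}, f v.1 / ‖v.1‖) = ‖r‖ := by
  have hle : ∀ v : {v : V // v ∈ W ∧ v ≠ 0}, f v.1 / ‖v.1‖ ≤ ‖r‖ := by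
    rintro ⟨v, hvW, hv⟩
    rw [div_le_iff₀ (norm_pos_iff.mpr hv), ← hr v hvW]
    exact real_inner_le_norm r v
  refine le_antisymm (Real.iSup_le hle (norm_nonneg r)) ?_
  by_cases h0 : r = 0
  · rw [h0, norm_zero]
    refine Real.iSup_nonneg fun v => ?_
    rw [← hr v.1 v.2.1, h0, inner_zero_left, zero_div]
  · refine le_ciSup_of_le ⟨‖r‖, Set.forall_mem_range.mpr hle⟩ ⟨r, hrW, h0⟩ ?_
    rw [← hr r hrW, real_inner_self_eq_norm_mul_norm, mul_self_div_self]

/-- If `x` has minimal norm on the line `x + ℝ d`, then `x` is orthogonal to `d`. -/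
lemma inner_eq_zero_of_forall_norm_le_norm_add_smul {V : Type*} [NormedAddCommGroup V]
    [InnerProductSpace ℝ V] {x d : V} (h : ∀ t : ℝ, ‖x‖ ≤ ‖x + t • d‖) : ⟪x, d⟫ = 0 := by
  have hquad : ∀ t : ℝ, 0 ≤ ‖d‖ ^ 2 * (t * t) + 2 * ⟪x, d⟫ * t + 0 := by
    intro t
    have hsq := pow_le_pow_left₀ (norm_nonneg x) (h t) 2
    rw [norm_add_sq_real, real_inner_smul_right, norm_smul, mul_pow, Real.norm_eq_abs,
      sq_abs] at hsq
    linarith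
  have hdiscrim := discrim_le_zero hquad
  rw [discrim] at hdiscrim
  exact pow_eq_zero_iff two_ne_zero |>.mp (by nlinarith [sq_nonneg ⟪x, d⟫])

/-- Discrete minimal residual: (i) the discrete dual seminorm of the residual of
`w` equals the norm of its `V^m`-Riesz representative `r w`; (ii) `u₀ ∈ Uⁿ`
minimizes the discrete dual seminorm over `Uⁿ` iff `(B w)(r u₀) = 0` for all
`w ∈ Uⁿ`. -/
theorem discrete_minres_riesz_and_orthogonality
    {V : Type*} [NormedAddCommGroup V] [InnerProductSpace ℝ V] [CompleteSpace V]
    {U : Type*} [NormedAddCommGroup U] [NormedSpace ℝ U]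
    (Vm : Submodule ℝ V) (hVm : FiniteDimensional ℝ Vm)
    (B : U →L[ℝ] (V →L[ℝ] ℝ)) (Un : Submodule ℝ U) (ℓ : V →L[ℝ] ℝ)
    (r : U → V)
    (hr : ∀ w ∈ Un, r w ∈ Vm ∧ ∀ v ∈ Vm, ⟪r w, v⟫ = ℓ v - (B w) v) :
    (∀ w ∈ Un,
      (⨆ v : {v : V // v ∈ Vm ∧ v ≠ 0}, (ℓ v.1 - (B w) v.1) / ‖v.1‖) = ‖r w‖) ∧
    (∀ u₀ ∈ Un,
      ((∀ w ∈ Un,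
          (⨆ v : {v : V // v ∈ Vm ∧ v ≠ 0}, (ℓ v.1 - (B u₀) v.1) / ‖v.1‖) ≤
            ⨆ v : {v : V // v ∈ Vm ∧ v ≠ 0}, (ℓ v.1 - (B w) v.1) / ‖v.1‖) ↔
        ∀ w ∈ Un, (B w) (r u₀) = 0)) := by
  have hnorm : ∀ w ∈ Un,
      (⨆ v : {v : V // v ∈ Vm ∧ v ≠ 0}, (ℓ v.1 - (B w) v.1) / ‖v.1‖) = ‖r w‖ :=
    fun w hw => iSup_div_norm_eq_norm_riesz (f := fun v => ℓ v - (B w) v) (hr w hw).1 (hr w hw).2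
  refine ⟨hnorm, fun u₀ hu₀ => ⟨fun hmin w hw => ?_, fun horth w hw => ?_⟩⟩
  · obtain ⟨hr₀, hr₀'⟩ := hr u₀ hu₀
    obtain ⟨hr₁, hr₁'⟩ := hr (u₀ + w) (Un.add_mem hu₀ hw)
    set d := r (u₀ + w) - r u₀ with hd
    have hdVm : d ∈ Vm := Vm.sub_mem hr₁ hr₀
    have hinner : ∀ v ∈ Vm, ⟪d, v⟫ = -(B w) v := by
      intro v hv
      rw [hd, inner_sub_left, hr₀' v hv, hr₁' v hv, map_add, add_apply]
      ring
    have haffine : ∀ t : ℝ, r (u₀ + t • w) = r u₀ + t • d := by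
      intro t
      obtain ⟨hrt, hrt'⟩ := hr (u₀ + t • w) (Un.add_mem hu₀ (Un.smul_mem t hw))
      have hmem : r (u₀ + t • w) - (r u₀ + t • d) ∈ Vm :=
        Vm.sub_mem hrt (Vm.add_mem hr₀ (Vm.smul_mem t hdVm))
      rw [← sub_eq_zero, ← inner_self_eq_zero (𝕜 := ℝ)]
      nth_rewrite 1 [inner_sub_left]
      rw [inner_add_left, real_inner_smul_left, hrt' _ hmem, hr₀' _ hmem, hinner _ hmem,
        map_add, map_smul, add_apply, smul_apply,
        smul_eq_mul]
      ring
    have hzero : ⟪r u₀, d⟫ = 0 := by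
      refine inner_eq_zero_of_forall_norm_le_norm_add_smul fun t => ?_
      have hmem := Un.add_mem hu₀ (Un.smul_mem t hw)
      rw [← haffine t, ← hnorm _ hu₀, ← hnorm _ hmem]
      exact hmin _ hmem
    rw [real_inner_comm, hinner _ hr₀] at hzero
    exact neg_eq_zero.mp hzero
  · rw [hnorm u₀ hu₀, hnorm w hw]
    obtain ⟨hr₀, hr₀'⟩ := hr u₀ hu₀
    have heq : ⟪r w, r u₀⟫ = ‖r u₀‖ * ‖r u₀‖ := by
      rw [← real_inner_self_eq_norm_mul_norm, (hr w hw).2 _ hr₀, hr₀' _ hr₀, horth w hw,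
        horth u₀ hu₀]
    rcases (norm_nonneg (r u₀)).eq_or_lt with h0 | hpos
    · rw [← h0]
      exact norm_nonneg _
    · exact le_of_mul_le_mul_right (heq ▸ real_inner_le_norm (r w) (r u₀)) hpos
end

section
/- Let G be a real symmetric positive definite m × m matrix and let B be a real m × n matrix whose kernel is trivial (B x = 0 implies x = 0). Then the (m+n) × (m+n) block matrix [[G, B], [Bᵀ, 0]] is invertible. -/
open Matrix

/-- The saddle-point block matrix `[[G, B], [Bᵀ, 0]]` is invertible when `G` is
symmetric positive definite and `B` has trivial kernel. -/
theorem saddle_point_matrix_invertible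
    {m n : ℕ} (G : Matrix (Fin m) (Fin m) ℝ) (hG : G.PosDef) (hGsymm : G.IsSymm)
    (B : Matrix (Fin m) (Fin n) ℝ) (hB : ∀ x : Fin n → ℝ, B.mulVec x = 0 → x = 0) :
    IsUnit (Matrix.fromBlocks G B Bᵀ (0 : Matrix (Fin n) (Fin n) ℝ)) := by
  have hBinj : Function.Injective B.mulVec := fun x y hxy =>
    sub_eq_zero.1 (hB _ (by rw [mulVec_sub, sub_eq_zero]; exact hxy))
  have hSchur : (Bᴴ * G⁻¹ * B).PosDef := hG.inv.conjTranspose_mul_mul_same hBinj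
  let _ : Invertible G := hG.isUnit.invertible
  rw [isUnit_fromBlocks_iff_of_invertible₁₁, zero_sub, IsUnit.neg_iff, invOf_eq_nonsing_inv,
    ← conjTranspose_eq_transpose_of_trivial]
  exact hSchur.isUnit
end
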